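/- Let ρ > 0 and C_ρ = 1 + 1/√ρ. There exists a constant K > 0, depending only on ρ and not on λ, such that for every λ > 0 the map e_λ(h) := 1 − λ·exp(h), defined for h in the Filipović space H_ρ with h(0) = 0, takes values in H_ρ and satisfies: for every r ≥ 0 and all h, k ∈ H_ρ with h(0) = k(0) = 0, ‖h‖_ρ ≤ r and ‖k‖_ρ ≤ r, one has ‖e_λ(h) − e_λ(k)‖_ρ ≤ K·λ·(1+r)·e^{C_ρ r}·‖h − k‖_ρ; and for every h ∈ H_ρ with h(0) = 0 and ‖h‖_ρ ≤ r, one has ‖e_λ(h)‖_ρ ≤ 1 + λ + λ·r·e^{C_ρ r}. -/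

import Mathlib

open MeasureTheory Filter

/-- `h : [0,∞) → ℝ` belongs to the Filipović space `H_ρ` with derivative `g`:
`g` is (a.e.) measurable on `[0,∞)`, `h x = h 0 + ∫_0^x g(t) dt` for all `x ≥ 0`, and
`∫_0^∞ g(t)² e^{ρ t} dt < ∞`. -/
def MemFil (ρ : ℝ) (h g : ℝ → ℝ) : Prop :=
  AEMeasurable g (volume.restrict (Set.Ici (0:ℝ))) ∧
  (∀ x : ℝ, 0 ≤ x → h x = h 0 + ∫ t in (0:ℝ)..x, g t) ∧
  IntegrableOn (fun t => (g t) ^ 2 * Real.exp (ρ * t)) (Set.Ici (0:ℝ))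

/-- The Filipović norm `‖h‖_ρ = (h(0)² + ∫_0^∞ g(t)² e^{ρ t} dt)^{1/2}`. -/
noncomputable def filNorm (ρ : ℝ) (h g : ℝ → ℝ) : ℝ :=
  Real.sqrt ((h 0) ^ 2 + ∫ t in Set.Ici (0:ℝ), (g t) ^ 2 * Real.exp (ρ * t))

/-!
On `(-∞, B]`, both `φ x = 1 - λ eˣ` and its derivative are Lipschitz with constant `|λ| e^B`.
By Cauchy–Schwarz against `e^{-ρt}`, the norm of `H_ρ` dominates the supremum norm up to the factor
`C_ρ`, so a ball of radius `r` consists of functions with values in `(-∞, C_ρ r]`. Writing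
`φ'(h) h' - φ'(k) k' = φ'(h) (h' - k') + (φ'(h) - φ'(k)) k'` and applying Minkowski's inequality in
`ℝ × L²(e^{ρt} dt)` gives the Lipschitz estimate with `K = C_ρ`, and the growth bound follows from
the case `k = 0`.
-/

open scoped NNReal

theorem absolutelyContinuousOnInterval_comp_of_lipschitzOnWith {X Y : Type*}
    [PseudoMetricSpace X] [PseudoMetricSpace Y] {φ : X → Y} {f : ℝ → X} {a b : ℝ} {K : ℝ≥0}
    (hφ : LipschitzOnWith K φ (f '' Set.uIcc a b)) (hf : AbsolutelyContinuousOnInterval f a b) :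
    AbsolutelyContinuousOnInterval (fun x => φ (f x)) a b := by
  have hK := Tendsto.const_mul (K : ℝ) hf
  rw [mul_zero] at hK
  refine squeeze_zero' (.of_forall fun E => Finset.sum_nonneg fun _ _ => dist_nonneg) ?_ hK
  filter_upwards [eventually_inf_principal.2 (.of_forall fun _ hE => hE)] with E hE
  rw [Finset.mul_sum]
  refine Finset.sum_le_sum fun i hi => hφ.dist_le_mul _ ?_ _ ?_
  exacts [Set.mem_image_of_mem f (hE.1 i hi).1, Set.mem_image_of_mem f (hE.1 i hi).2]

theorem comp_eq_add_integral_deriv_mul {φ f g : ℝ → ℝ} {a b : ℝ} (hφ : ContDiff ℝ 1 φ)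
    (hg : IntervalIntegrable g volume a b)
    (hf : ∀ x ∈ Set.uIcc a b, f x = f a + ∫ t in a..x, g t) :
    φ (f b) = φ (f a) + ∫ t in a..b, deriv φ (f t) * g t := by
  set F : ℝ → ℝ := fun x => f a + ∫ t in a..x, g t
  have hac : AbsolutelyContinuousOnInterval F a b :=
    (LipschitzWith.const (f a)).lipschitzOnWith.absolutelyContinuousOnInterval.add
      (hg.absolutelyContinuousOnInterval_intervalIntegral Set.left_mem_uIcc)
  obtain ⟨K, hK⟩ := LocallyLipschitzOn.exists_lipschitzOnWith_of_compact
    (isCompact_uIcc.image_of_continuousOn hac.continuousOn)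
    (hφ.locallyLipschitz.locallyLipschitzOn (s := F '' Set.uIcc a b))
  have hftc := (absolutelyContinuousOnInterval_comp_of_lipschitzOnWith hK hac).integral_deriv_eq_sub
  have hderiv : ∫ t in a..b, deriv (fun x => φ (F x)) t = ∫ t in a..b, deriv φ (f t) * g t := by
    refine intervalIntegral.integral_congr_ae ?_
    filter_upwards [hg.ae_hasDerivAt_integral] with t ht hmem
    have htI := Set.uIoc_subset_uIcc hmem
    have hFt : HasDerivAt F (g t) t := (ht htI a Set.left_mem_uIcc).const_add (f a)
    have hφt := (hφ.differentiable one_ne_zero (F t)).hasDerivAt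
    rw [hf t htI]
    exact (hφt.comp t hFt).deriv
  rw [← hderiv, hftc, hf b Set.right_mem_uIcc]
  simp [F]

/-- The measure `e^{ρt} dt` on `[0, ∞)`, whose `L²` space contains the derivatives of the elements
of `H_ρ`. -/
noncomputable def filMeasure (ρ : ℝ) : Measure ℝ :=
  (volume.restrict (Set.Ici 0)).withDensity fun t => ENNReal.ofReal (Real.exp (ρ * t))

section filMeasure

variable {ρ : ℝ} {f g : ℝ → ℝ}

theorem integral_filMeasure (ρ : ℝ) (f : ℝ → ℝ) :
    ∫ t, f t ∂filMeasure ρ = ∫ t in Set.Ici (0 : ℝ), f t * Real.exp (ρ * t) := by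
  rw [filMeasure, integral_withDensity_eq_integral_toReal_smul (by fun_prop) (by simp)]
  simp only [ENNReal.toReal_ofReal (Real.exp_nonneg _), smul_eq_mul, mul_comm]

theorem integrable_filMeasure_iff :
    Integrable f (filMeasure ρ) ↔
      IntegrableOn (fun t => f t * Real.exp (ρ * t)) (Set.Ici 0) := by
  rw [filMeasure, integrable_withDensity_iff (by fun_prop) (by simp)]
  simp only [ENNReal.toReal_ofReal (Real.exp_nonneg _), IntegrableOn]

theorem ae_filMeasure_nonneg (ρ : ℝ) : ∀ᵐ t ∂filMeasure ρ, 0 ≤ t :=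
  (withDensity_absolutelyContinuous _ _).ae_le (ae_restrict_mem measurableSet_Ici)

theorem aestronglyMeasurable_filMeasure_iff :
    AEStronglyMeasurable f (filMeasure ρ) ↔ AEMeasurable f (volume.restrict (Set.Ici 0)) := by
  rw [← aestronglyMeasurable_iff_aemeasurable]
  exact ⟨fun hf => hf.mono_ac (withDensity_absolutelyContinuous' (by fun_prop)
    (.of_forall fun t => by simp [Real.exp_pos])), fun hf => hf.mono_ac
    (withDensity_absolutelyContinuous _ _)⟩

theorem memLp_two_filMeasure_iff :
    MemLp g 2 (filMeasure ρ) ↔ AEMeasurable g (volume.restrict (Set.Ici 0)) ∧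
      IntegrableOn (fun t => g t ^ 2 * Real.exp (ρ * t)) (Set.Ici 0) := by
  rw [← integrable_filMeasure_iff, ← aestronglyMeasurable_filMeasure_iff (ρ := ρ)]
  exact ⟨fun hg => ⟨hg.1, hg.integrable_sq⟩, fun hg => (memLp_two_iff_integrable_sq hg.1).2 hg.2⟩

theorem exp_neg_sq_mul_exp (ρ t : ℝ) :
    Real.exp (-ρ * t) ^ 2 * Real.exp (ρ * t) = Real.exp (-ρ * t) := by
  rw [← Real.exp_nat_mul, ← Real.exp_add]
  ring_nf

theorem memLp_two_exp_neg_filMeasure (hρ : 0 < ρ) :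
    MemLp (fun t => Real.exp (-ρ * t)) 2 (filMeasure ρ) := by
  refine memLp_two_filMeasure_iff.2 ⟨by fun_prop, ?_⟩
  simp only [exp_neg_sq_mul_exp]
  exact (integrableOn_Ici_iff_integrableOn_Ioi (by simp)).2 (exp_neg_integrableOn_Ioi 0 hρ)

theorem integral_exp_neg_sq_filMeasure (hρ : 0 < ρ) :
    ∫ t, Real.exp (-ρ * t) ^ 2 ∂filMeasure ρ = 1 / ρ := by
  simp only [integral_filMeasure, exp_neg_sq_mul_exp]
  rw [integral_Ici_eq_integral_Ioi, integral_exp_mul_Ioi (neg_lt_zero.2 hρ)]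
  simp

theorem integrableOn_Ici_of_memLp_filMeasure (hρ : 0 < ρ) (hg : MemLp g 2 (filMeasure ρ)) :
    IntegrableOn g (Set.Ici 0) := by
  have hint := integrable_filMeasure_iff.1 (hg.integrable_mul (memLp_two_exp_neg_filMeasure hρ))
  simpa [mul_assoc, ← Real.exp_add] using hint

theorem integral_Ici_abs_le_of_memLp_filMeasure (hρ : 0 < ρ) (hg : MemLp g 2 (filMeasure ρ)) :
    ∫ t in Set.Ici (0 : ℝ), |g t| ≤ √(∫ t, g t ^ 2 ∂filMeasure ρ) / √ρ := by
  have hcs := integral_mul_norm_le_Lp_mul_Lq (μ := filMeasure ρ) Real.HolderConjugate.two_two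
    (by simpa using hg)
    (by rw [ENNReal.ofReal_ofNat]; exact memLp_two_exp_neg_filMeasure hρ)
  simp only [Real.norm_eq_abs, Real.rpow_two, sq_abs, ← Real.sqrt_eq_rpow] at hcs
  calc ∫ t in Set.Ici (0 : ℝ), |g t|
      = ∫ t, |g t| * |Real.exp (-ρ * t)| ∂filMeasure ρ := by
        simp [integral_filMeasure, mul_assoc, ← Real.exp_add]
    _ ≤ √(∫ t, g t ^ 2 ∂filMeasure ρ) * √(∫ t, Real.exp (-ρ * t) ^ 2 ∂filMeasure ρ) := hcs
    _ = √(∫ t, g t ^ 2 ∂filMeasure ρ) / √ρ := by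
        rw [integral_exp_neg_sq_filMeasure hρ, Real.sqrt_div zero_le_one, Real.sqrt_one,
          mul_one_div]

end filMeasure

section filNorm

variable {ρ c : ℝ} {h₁ h₂ g g₁ g₂ : ℝ → ℝ}

theorem filNorm_eq_sqrt (ρ : ℝ) (h g : ℝ → ℝ) :
    filNorm ρ h g = √(h 0 ^ 2 + ∫ t, g t ^ 2 ∂filMeasure ρ) := by
  rw [filNorm, integral_filMeasure]

theorem abs_apply_zero_le_filNorm (ρ : ℝ) (h g : ℝ → ℝ) : |h 0| ≤ filNorm ρ h g := by
  rw [filNorm_eq_sqrt]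
  exact Real.abs_le_sqrt (le_add_of_nonneg_right (integral_nonneg fun t => sq_nonneg (g t)))

theorem sqrt_integral_sq_le_filNorm (ρ : ℝ) (h g : ℝ → ℝ) :
    √(∫ t, g t ^ 2 ∂filMeasure ρ) ≤ filNorm ρ h g := by
  rw [filNorm_eq_sqrt]
  exact Real.sqrt_le_sqrt (le_add_of_nonneg_left (sq_nonneg (h 0)))

theorem filNorm_nonneg (ρ : ℝ) (h g : ℝ → ℝ) : 0 ≤ filNorm ρ h g :=
  Real.sqrt_nonneg _

theorem filNorm_const (ρ c : ℝ) : filNorm ρ (fun _ => c) (fun _ => 0) = |c| := by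
  simp [filNorm, Real.sqrt_sq_eq_abs]

theorem filNorm_eq_norm_toLp (h : ℝ → ℝ) (hg : MemLp g 2 (filMeasure ρ)) :
    filNorm ρ h g = ‖WithLp.toLp 2 (h 0, hg.toLp g)‖ := by
  have hsq : ‖hg.toLp g‖ ^ 2 = ∫ t, g t ^ 2 ∂filMeasure ρ := by
    rw [← real_inner_self_eq_norm_sq, L2.inner_def]
    refine integral_congr_ae ?_
    filter_upwards [hg.coeFn_toLp] with t ht
    simp [ht, sq]
  rw [filNorm_eq_sqrt, WithLp.prod_norm_eq_of_L2, ← hsq, Real.norm_eq_abs, sq_abs]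
  rfl

theorem filNorm_add_le (h₁ h₂ : ℝ → ℝ) (hg₁ : MemLp g₁ 2 (filMeasure ρ))
    (hg₂ : MemLp g₂ 2 (filMeasure ρ)) :
    filNorm ρ (fun x => h₁ x + h₂ x) (fun t => g₁ t + g₂ t) ≤
      filNorm ρ h₁ g₁ + filNorm ρ h₂ g₂ := by
  rw [filNorm_eq_norm_toLp h₁ hg₁, filNorm_eq_norm_toLp h₂ hg₂,
    filNorm_eq_norm_toLp _ (g := fun t => g₁ t + g₂ t) (hg₁.add hg₂)]
  exact norm_add_le (WithLp.toLp 2 (h₁ 0, hg₁.toLp g₁)) (WithLp.toLp 2 (h₂ 0, hg₂.toLp g₂))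

theorem filNorm_le_mul_filNorm (hc : 0 ≤ c) (hg₂ : MemLp g₂ 2 (filMeasure ρ))
    (hzero : |h₁ 0| ≤ c * |h₂ 0|) (hle : ∀ t, 0 ≤ t → |g₁ t| ≤ c * |g₂ t|) :
    filNorm ρ h₁ g₁ ≤ c * filNorm ρ h₂ g₂ := by
  have sq_le {x y : ℝ} (hxy : |x| ≤ c * |y|) : x ^ 2 ≤ c ^ 2 * y ^ 2 := by
    rw [← sq_abs x, ← sq_abs y, ← mul_pow]
    gcongr
  have hint : ∫ t, g₁ t ^ 2 ∂filMeasure ρ ≤ c ^ 2 * ∫ t, g₂ t ^ 2 ∂filMeasure ρ := by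
    rw [← integral_const_mul]
    refine integral_mono_of_nonneg (.of_forall fun t => sq_nonneg (g₁ t))
      (hg₂.integrable_sq.const_mul _) ?_
    filter_upwards [ae_filMeasure_nonneg ρ] with t ht using sq_le (hle t ht)
  rw [filNorm_eq_sqrt, filNorm_eq_sqrt, ← Real.sqrt_sq hc, ← Real.sqrt_mul (sq_nonneg c), mul_add]
  exact Real.sqrt_le_sqrt (add_le_add (sq_le hzero) hint)

end filNorm

namespace MemFil

variable {ρ : ℝ} {h k g gh gk φ : ℝ → ℝ}

theorem memLp (hh : MemFil ρ h g) : MemLp g 2 (filMeasure ρ) :=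
  memLp_two_filMeasure_iff.2 ⟨hh.1, hh.2.2⟩

theorem of_memLp (hg : MemLp g 2 (filMeasure ρ))
    (hh : ∀ x, 0 ≤ x → h x = h 0 + ∫ t in (0 : ℝ)..x, g t) : MemFil ρ h g :=
  ⟨(memLp_two_filMeasure_iff.1 hg).1, hh, (memLp_two_filMeasure_iff.1 hg).2⟩

theorem const (ρ c : ℝ) : MemFil ρ (fun _ => c) (fun _ => 0) :=
  of_memLp MemLp.zero' fun _ _ => by simp

theorem integrableOn (hρ : 0 < ρ) (hh : MemFil ρ h g) : IntegrableOn g (Set.Ici 0) :=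
  integrableOn_Ici_of_memLp_filMeasure hρ hh.memLp

theorem intervalIntegrable (hρ : 0 < ρ) (hh : MemFil ρ h g) {x : ℝ} (hx : 0 ≤ x) :
    IntervalIntegrable g volume 0 x :=
  ((hh.integrableOn hρ).mono_set (by
    rw [Set.uIcc_of_le hx]
    exact Set.Icc_subset_Ici_self)).intervalIntegrable

theorem sub (hρ : 0 < ρ) (hh : MemFil ρ h gh) (hk : MemFil ρ k gk) :
    MemFil ρ (fun x => h x - k x) (fun t => gh t - gk t) := by
  refine of_memLp (hh.memLp.sub hk.memLp) fun x hx => ?_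
  rw [intervalIntegral.integral_sub (hh.intervalIntegrable hρ hx) (hk.intervalIntegrable hρ hx),
    hh.2.1 x hx, hk.2.1 x hx]
  ring

theorem abs_apply_le (hρ : 0 < ρ) (hh : MemFil ρ h g) {x : ℝ} (hx : 0 ≤ x) :
    |h x| ≤ (1 + 1 / √ρ) * filNorm ρ h g := by
  have hIoc : Set.Ioc 0 x ⊆ Set.Ici 0 := fun t ht => ht.1.le
  have hincr : |∫ t in (0 : ℝ)..x, g t| ≤ filNorm ρ h g / √ρ :=
    calc |∫ t in (0 : ℝ)..x, g t|
        ≤ ∫ t in Set.Ioc 0 x, |g t| := by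
          rw [intervalIntegral.integral_of_le hx]
          exact abs_integral_le_integral_abs
      _ ≤ ∫ t in Set.Ici (0 : ℝ), |g t| :=
          setIntegral_mono_set (hh.integrableOn hρ).abs (.of_forall fun t => abs_nonneg (g t))
            hIoc.eventuallyLE
      _ ≤ √(∫ t, g t ^ 2 ∂filMeasure ρ) / √ρ :=
          integral_Ici_abs_le_of_memLp_filMeasure hρ hh.memLp
      _ ≤ filNorm ρ h g / √ρ := by
          gcongr
          exact sqrt_integral_sq_le_filNorm ρ h g
  calc |h x| ≤ |h 0| + |∫ t in (0 : ℝ)..x, g t| := hh.2.1 x hx ▸ abs_add_le _ _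
    _ ≤ filNorm ρ h g + filNorm ρ h g / √ρ := add_le_add (abs_apply_zero_le_filNorm ρ h g) hincr
    _ = (1 + 1 / √ρ) * filNorm ρ h g := by ring

theorem continuousOn (hρ : 0 < ρ) (hh : MemFil ρ h g) : ContinuousOn h (Set.Ici 0) := by
  have hG : Integrable ((Set.Ici 0).indicator g) :=
    (integrable_indicator_iff measurableSet_Ici).2 (hh.integrableOn hρ)
  refine ((continuous_const (y := h 0)).add (intervalIntegral.continuous_primitive
    (fun _ _ => hG.intervalIntegrable) 0)).continuousOn.congr fun x hx => ?_
  rw [hh.2.1 x hx]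
  congr 1
  refine intervalIntegral.integral_congr fun t ht => ?_
  rw [Set.uIcc_of_le hx] at ht
  exact (Set.indicator_of_mem (s := Set.Ici 0) ht.1 g).symm

theorem memLp_comp_mul (hρ : 0 < ρ) (hh : MemFil ρ h gh) {ψ : ℝ → ℝ} (hψ : Continuous ψ)
    (hg : MemLp g 2 (filMeasure ρ)) : MemLp (fun t => ψ (h t) * g t) 2 (filMeasure ρ) := by
  obtain ⟨M, hM⟩ := (isCompact_Icc (a := -((1 + 1 / √ρ) * filNorm ρ h gh))
    (b := (1 + 1 / √ρ) * filNorm ρ h gh)).exists_bound_of_continuousOn hψ.continuousOn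
  have hmeas : AEStronglyMeasurable (fun t => ψ (h t)) (filMeasure ρ) :=
    aestronglyMeasurable_filMeasure_iff.2
      ((hψ.comp_continuousOn (hh.continuousOn hρ)).aemeasurable measurableSet_Ici)
  refine hg.of_le_mul (c := M) (hmeas.mul hg.1) ?_
  filter_upwards [ae_filMeasure_nonneg ρ] with t ht
  rw [norm_mul]
  gcongr
  exact hM _ (abs_le.1 (hh.abs_apply_le hρ ht))

theorem comp (hρ : 0 < ρ) (hh : MemFil ρ h g) (hφ : ContDiff ℝ 1 φ) :
    MemFil ρ (fun x => φ (h x)) (fun t => deriv φ (h t) * g t) :=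
  of_memLp (hh.memLp_comp_mul hρ (hφ.continuous_deriv le_rfl) hh.memLp) fun _ hx =>
    comp_eq_add_integral_deriv_mul hφ (hh.intervalIntegrable hρ hx) fun y hy =>
      hh.2.1 y (by rw [Set.uIcc_of_le hx] at hy; exact hy.1)

theorem filNorm_comp_sub_comp_le (hρ : 0 < ρ) (hh : MemFil ρ h gh) (hk : MemFil ρ k gk)
    (hφ : ContDiff ℝ 1 φ) {s : Set ℝ} (hs : Convex ℝ s) (hhs : ∀ t, 0 ≤ t → h t ∈ s)
    (hks : ∀ t, 0 ≤ t → k t ∈ s) {M L : ℝ≥0} (hM : ∀ x ∈ s, ‖deriv φ x‖₊ ≤ M)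
    (hL : LipschitzOnWith L (deriv φ) s) :
    filNorm ρ (fun x => φ (h x) - φ (k x)) (fun t => deriv φ (h t) * gh t - deriv φ (k t) * gk t) ≤
      (M + L * (1 + 1 / √ρ) * filNorm ρ k gk) *
        filNorm ρ (fun x => h x - k x) (fun t => gh t - gk t) := by
  have hd := hh.sub hρ hk
  have hφ' := hφ.continuous_deriv le_rfl
  set D := filNorm ρ (fun x => h x - k x) (fun t => gh t - gk t)
  have hlip : LipschitzOnWith M φ s := hs.lipschitzOnWith_of_nnnorm_deriv_le
    (fun x _ => hφ.differentiable one_ne_zero x) hM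
  have hlinear : filNorm ρ (fun x => φ (h x) - φ (k x)) (fun t => deriv φ (h t) * (gh t - gk t)) ≤
      M * D := by
    refine filNorm_le_mul_filNorm M.2 hd.memLp (hlip.dist_le_mul _ (hhs 0 le_rfl) _ (hks 0 le_rfl))
      fun t ht => ?_
    rw [abs_mul]
    gcongr
    exact hM _ (hhs t ht)
  have hcoeff : filNorm ρ (fun _ => 0) (fun t => (deriv φ (h t) - deriv φ (k t)) * gk t) ≤
      L * ((1 + 1 / √ρ) * D) * filNorm ρ k gk := by
    have hD : 0 ≤ D := filNorm_nonneg _ _ _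
    refine filNorm_le_mul_filNorm (by positivity) hk.memLp (by rw [abs_zero]; positivity)
      fun t ht => ?_
    rw [abs_mul]
    gcongr
    calc |deriv φ (h t) - deriv φ (k t)| ≤ L * |h t - k t| :=
          hL.dist_le_mul _ (hhs t ht) _ (hks t ht)
      _ ≤ L * ((1 + 1 / √ρ) * D) := by gcongr; exact hd.abs_apply_le hρ ht
  have hcoeff_memLp : MemLp (fun t => (deriv φ (h t) - deriv φ (k t)) * gk t) 2 (filMeasure ρ) := by
    simp only [sub_mul]
    exact (hh.memLp_comp_mul hρ hφ' hk.memLp).sub (hk.memLp_comp_mul hρ hφ' hk.memLp)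
  calc filNorm ρ (fun x => φ (h x) - φ (k x))
        (fun t => deriv φ (h t) * gh t - deriv φ (k t) * gk t)
      = filNorm ρ (fun x => φ (h x) - φ (k x) + 0)
          (fun t => deriv φ (h t) * (gh t - gk t) + (deriv φ (h t) - deriv φ (k t)) * gk t) := by
        congr 1 <;> funext <;> ring
    _ ≤ M * D + L * ((1 + 1 / √ρ) * D) * filNorm ρ k gk :=
        (filNorm_add_le _ _ (hh.memLp_comp_mul hρ hφ' hd.memLp) hcoeff_memLp).trans
          (add_le_add hlinear hcoeff)
    _ = (M + L * (1 + 1 / √ρ) * filNorm ρ k gk) * D := by ring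

end MemFil

section OneSubMulExp

variable {ρ : ℝ} {h k g gh gk : ℝ → ℝ}

theorem deriv_one_sub_mul_exp (lam : ℝ) :
    deriv (fun x => 1 - lam * Real.exp x) = fun x => -(lam * Real.exp x) := by
  ext x
  simp

theorem abs_neg_mul_exp_le (lam : ℝ) {B x : ℝ} (hx : x ≤ B) :
    |-(lam * Real.exp x)| ≤ |lam| * Real.exp B := by
  rw [abs_neg, abs_mul, Real.abs_exp]
  gcongr

theorem memFil_one_sub_mul_exp (hρ : 0 < ρ) (lam : ℝ) (hh : MemFil ρ h g) :
    MemFil ρ (fun x => 1 - lam * Real.exp (h x)) (fun t => -(lam * Real.exp (h t) * g t)) := by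
  have hcomp := hh.comp hρ (φ := fun x => 1 - lam * Real.exp x) (by fun_prop)
  simpa only [deriv_one_sub_mul_exp, neg_mul] using hcomp

theorem filNorm_one_sub_mul_exp_sub_le (hρ : 0 < ρ) (lam : ℝ) (hh : MemFil ρ h gh)
    (hk : MemFil ρ k gk) {B : ℝ} (hhB : ∀ t, 0 ≤ t → h t ≤ B) (hkB : ∀ t, 0 ≤ t → k t ≤ B) :
    filNorm ρ (fun x => (1 - lam * Real.exp (h x)) - (1 - lam * Real.exp (k x)))
        (fun t => -(lam * Real.exp (h t) * gh t) - -(lam * Real.exp (k t) * gk t)) ≤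
      |lam| * Real.exp B * (1 + (1 + 1 / √ρ) * filNorm ρ k gk) *
        filNorm ρ (fun x => h x - k x) (fun t => gh t - gk t) := by
  let M : ℝ≥0 := ⟨|lam| * Real.exp B, by positivity⟩
  have hM (x) (hx : x ∈ Set.Iic B) : ‖-(lam * Real.exp x)‖₊ ≤ M := abs_neg_mul_exp_le lam hx
  have hlip : LipschitzOnWith M (fun x => -(lam * Real.exp x)) (Set.Iic B) :=
    (convex_Iic B).lipschitzOnWith_of_nnnorm_hasDerivWithin_le
      (fun x _ => ((Real.hasDerivAt_exp x).const_mul lam).neg.hasDerivWithinAt) hM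
  have hcomp := hh.filNorm_comp_sub_comp_le hρ hk (φ := fun x => 1 - lam * Real.exp x)
    (by fun_prop) (convex_Iic B) hhB hkB (M := M) (L := M) (by rwa [deriv_one_sub_mul_exp])
    (by rwa [deriv_one_sub_mul_exp])
  have hMB : (M : ℝ) = |lam| * Real.exp B := rfl
  simp only [deriv_one_sub_mul_exp, neg_mul, hMB] at hcomp
  exact hcomp.trans_eq (by ring)

theorem filNorm_one_sub_mul_exp_le (hρ : 0 < ρ) (lam : ℝ) (hh : MemFil ρ h g) {B : ℝ}
    (hB : 0 ≤ B) (hhB : ∀ t, 0 ≤ t → h t ≤ B) :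
    filNorm ρ (fun x => 1 - lam * Real.exp (h x)) (fun t => -(lam * Real.exp (h t) * g t)) ≤
      |1 - lam| + |lam| * Real.exp B * filNorm ρ h g := by
  have hzero := MemFil.const ρ 0
  have hsub := filNorm_one_sub_mul_exp_sub_le hρ lam hh hzero hhB fun _ _ => hB
  simp only [filNorm_const, abs_zero, mul_zero, add_zero, mul_one, sub_zero, neg_zero,
    Real.exp_zero] at hsub
  have hadd := filNorm_add_le (fun _ => 1 - lam)
    (fun x => 1 - lam * Real.exp (h x) - (1 - lam)) hzero.memLp
    (memFil_one_sub_mul_exp hρ lam hh).memLp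
  simp only [add_sub_cancel, zero_add, filNorm_const] at hadd
  exact hadd.trans (add_le_add_right hsub _)

end OneSubMulExp

theorem filipovic_e_lambda_general (ρ : ℝ) (hρ : 0 < ρ) (lam : ℝ) :
    (∀ h g : ℝ → ℝ, MemFil ρ h g →
      MemFil ρ (fun x => 1 - lam * Real.exp (h x)) (fun t => -(lam * Real.exp (h t) * g t))) ∧
    ∀ r : ℝ,
      (∀ h k gh gk : ℝ → ℝ, MemFil ρ h gh → MemFil ρ k gk →
        filNorm ρ h gh ≤ r → filNorm ρ k gk ≤ r →
        filNorm ρ (fun x => (1 - lam * Real.exp (h x)) - (1 - lam * Real.exp (k x)))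
          (fun t => -(lam * Real.exp (h t) * gh t) - -(lam * Real.exp (k t) * gk t))
          ≤ (1 + 1 / √ρ) * |lam| * (1 + r) * Real.exp ((1 + 1 / √ρ) * r)
            * filNorm ρ (fun x => h x - k x) (fun t => gh t - gk t)) ∧
      (∀ h g : ℝ → ℝ, MemFil ρ h g → filNorm ρ h g ≤ r →
        filNorm ρ (fun x => 1 - lam * Real.exp (h x)) (fun t => -(lam * Real.exp (h t) * g t))
          ≤ 1 + |lam| + |lam| * r * Real.exp ((1 + 1 / √ρ) * r)) := by
  have le_of_filNorm_le {h g : ℝ → ℝ} {r : ℝ} (hh : MemFil ρ h g) (hr : filNorm ρ h g ≤ r)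
      (t : ℝ) (ht : 0 ≤ t) : h t ≤ (1 + 1 / √ρ) * r :=
    (le_abs_self _).trans ((hh.abs_apply_le hρ ht).trans (by gcongr))
  refine ⟨fun h g hh => memFil_one_sub_mul_exp hρ lam hh, fun r =>
    ⟨fun h k gh gk hh hk hhr hkr => ?_, fun h g hh hhr => ?_⟩⟩
  · refine (filNorm_one_sub_mul_exp_sub_le hρ lam hh hk (le_of_filNorm_le hh hhr)
      (le_of_filNorm_le hk hkr)).trans (mul_le_mul_of_nonneg_right ?_ (filNorm_nonneg _ _ _))
    calc |lam| * Real.exp ((1 + 1 / √ρ) * r) * (1 + (1 + 1 / √ρ) * filNorm ρ k gk)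
        ≤ |lam| * Real.exp ((1 + 1 / √ρ) * r) * ((1 + 1 / √ρ) + (1 + 1 / √ρ) * r) := by
          gcongr
          exact le_add_of_nonneg_right (by positivity)
      _ = (1 + 1 / √ρ) * |lam| * (1 + r) * Real.exp ((1 + 1 / √ρ) * r) := by ring
  · have hr : 0 ≤ r := (filNorm_nonneg ρ h g).trans hhr
    calc filNorm ρ (fun x => 1 - lam * Real.exp (h x)) (fun t => -(lam * Real.exp (h t) * g t))
        ≤ |1 - lam| + |lam| * Real.exp ((1 + 1 / √ρ) * r) * filNorm ρ h g :=
          filNorm_one_sub_mul_exp_le hρ lam hh (by positivity) (le_of_filNorm_le hh hhr)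
      _ ≤ (1 + |lam|) + |lam| * Real.exp ((1 + 1 / √ρ) * r) * r := by
          gcongr
          simpa using abs_sub 1 lam
      _ = 1 + |lam| + |lam| * r * Real.exp ((1 + 1 / √ρ) * r) := by ring

/-- there exists `K > 0`, depending only on `ρ` and not on `λ`, such that
for every `λ > 0` the map `e_λ(h) = 1 − λ exp(h)`, defined for `h ∈ H¹_ρ` (i.e. `h(0)=0`),
takes values in `H_ρ`, is locally Lipschitz with Lipschitz function
`K λ (1+r) e^{C_ρ r}`, and satisfies `‖e_λ(h)‖_ρ ≤ 1 + λ + λ r e^{C_ρ r}` on the ball of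
radius `r`, where `C_ρ = 1 + 1/√ρ`. -/
theorem filipovic_e_lambda (ρ : ℝ) (hρ : 0 < ρ) :
    ∃ K : ℝ, 0 < K ∧
      ∀ lam : ℝ, 0 < lam →
        (∀ h g : ℝ → ℝ, MemFil ρ h g → h 0 = 0 →
          MemFil ρ (fun x => 1 - lam * Real.exp (h x))
            (fun t => -(lam * Real.exp (h t) * g t))) ∧
        ∀ r : ℝ, 0 ≤ r →
          (∀ h k gh gk : ℝ → ℝ, MemFil ρ h gh → MemFil ρ k gk →
            h 0 = 0 → k 0 = 0 → filNorm ρ h gh ≤ r → filNorm ρ k gk ≤ r →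
            filNorm ρ
              (fun x => (1 - lam * Real.exp (h x)) - (1 - lam * Real.exp (k x)))
              (fun t => -(lam * Real.exp (h t) * gh t) - -(lam * Real.exp (k t) * gk t))
              ≤ K * lam * (1 + r) * Real.exp ((1 + 1 / Real.sqrt ρ) * r)
                * filNorm ρ (fun x => h x - k x) (fun t => gh t - gk t)) ∧
          (∀ h g : ℝ → ℝ, MemFil ρ h g → h 0 = 0 → filNorm ρ h g ≤ r →
            filNorm ρ (fun x => 1 - lam * Real.exp (h x))
              (fun t => -(lam * Real.exp (h t) * g t))
              ≤ 1 + lam + lam * r * Real.exp ((1 + 1 / Real.sqrt ρ) * r)) := by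
  refine ⟨1 + 1 / √ρ, by positivity, fun lam hlam => ?_⟩
  have hgeneral := filipovic_e_lambda_general ρ hρ lam
  rw [abs_of_pos hlam] at hgeneral
  exact ⟨fun h g hh _ => hgeneral.1 h g hh, fun r _ =>
    ⟨fun h k gh gk hh hk _ _ => (hgeneral.2 r).1 h k gh gk hh hk,
      fun h g hh _ => (hgeneral.2 r).2 h g hh⟩⟩
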